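/- Asymptotics of the Weyl solution in a sector (Lemma 2, equation (17)): Fix δ ∈ (0, π/2) and x ∈ [0,T). Then, as |λ| → ∞ with arg λ ∈ [δ, π−δ] (for such λ of large modulus Δ₁(λ) ≠ 0, so Φ(x,λ) is defined), one has (h_{1,1} − i h_{1,2}) e^{−iλx} Φ(x,λ) → (1, −i)ᵀ. -/

import Mathlib

open MeasureTheory Set Filter

noncomputable section

/-- A function `f : ℝ → ℂ` is absolutely continuous on `[0, T]`:
it is the indefinite integral of an integrable function. -/
def AbsContOn (f : ℝ → ℂ) (T : ℝ) : Prop :=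
  ∃ g : ℝ → ℂ, IntervalIntegrable g volume 0 T ∧
    ∀ x ∈ Icc (0 : ℝ) T, f x = f 0 + ∫ t in (0 : ℝ)..x, g t

/-- `y : ℝ → ℂ × ℂ` is a solution of the Dirac system `B y' + Ω y = λ y` on `[0, T]`,
where `B = ![![0,1],![-1,0]]` and `Ω = ![![p,q],![q,-p]]`:  `y` is continuous on `[0,T]`
and satisfies the equivalent system of integral equations coming from
`y₁' = q y₁ - (p + λ) y₂`, `y₂' = (λ - p) y₁ - q y₂`
(this encodes: `y` is absolutely continuous and the ODE holds a.e.). -/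
def IsDiracSol (p q : ℝ → ℂ) (T : ℝ) (lam : ℂ) (y : ℝ → ℂ × ℂ) : Prop :=
  ContinuousOn y (Icc (0 : ℝ) T) ∧
    ∀ x ∈ Icc (0 : ℝ) T,
      ((y x).1 = (y 0).1 + ∫ t in (0 : ℝ)..x, (q t * (y t).1 - (p t + lam) * (y t).2)) ∧
      ((y x).2 = (y 0).2 + ∫ t in (0 : ℝ)..x, ((lam - p t) * (y t).1 - q t * (y t).2))

/-- A nonlocal linear form `U(y) = ∫_{[0,T]} y₁ dμ₁ + ∫_{[0,T]} y₂ dμ₂`, where the complex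
Borel measures `μᵢ` are encoded (via Radon–Nikodym) as integrable complex densities `wᵢ`
with respect to finite positive measures. -/
structure NonlocalForm (T : ℝ) where
  μ₁ : Measure ℝ
  μ₂ : Measure ℝ
  finite₁ : IsFiniteMeasure μ₁
  finite₂ : IsFiniteMeasure μ₂
  w₁ : ℝ → ℂ
  w₂ : ℝ → ℂ
  int₁ : Integrable w₁ μ₁
  int₂ : Integrable w₂ μ₂

namespace NonlocalForm

variable {T : ℝ}

/-- The value `U(y)` of the nonlocal form on a function `y`. -/
def app (U : NonlocalForm T) (y : ℝ → ℂ × ℂ) : ℂ :=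
  (∫ t in Icc (0 : ℝ) T, U.w₁ t * (y t).1 ∂U.μ₁) +
    ∫ t in Icc (0 : ℝ) T, U.w₂ t * (y t).2 ∂U.μ₂

/-- `h₁ = μ₁({0})`, the mass of the first complex measure at `0`. -/
def h₁ (U : NonlocalForm T) : ℂ := U.w₁ 0 * ((U.μ₁ {0}).toReal : ℂ)

/-- `h₂ = μ₂({0})`, the mass of the second complex measure at `0`. -/
def h₂ (U : NonlocalForm T) : ℂ := U.w₂ 0 * ((U.μ₂ {0}).toReal : ℂ)

end NonlocalForm

/-- A two-point (local) linear form `y ↦ c₁ y₁(t) + c₂ y₂(t)`. -/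
def locForm (c₁ c₂ : ℂ) (t : ℝ) (y : ℝ → ℂ × ℂ) : ℂ := c₁ * (y t).1 + c₂ * (y t).2

/-- `f` and `g` have the same order of zero at `z` (order possibly `0` or `∞`):
for every `n`, the first `n` derivatives of `f` vanish at `z` iff
the first `n` derivatives of `g` do. -/
def ZeroOrderEq (f g : ℂ → ℂ) (z : ℂ) : Prop :=
  ∀ n : ℕ, (∀ k < n, iteratedDeriv k f z = 0) ↔ (∀ k < n, iteratedDeriv k g z = 0)

/-- The filter of `λ → ∞` within the sector `arg λ ∈ [δ, π - δ]`. -/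
def sectorFilter (δ : ℝ) : Filter ℂ :=
  Filter.comap (fun lam : ℂ => ‖lam‖) Filter.atTop ⊓
    Filter.principal {lam : ℂ | Complex.arg lam ∈ Icc δ (Real.pi - δ)}

lemma hasDerivAt_of_eq {f g : ℝ → ℂ} {f' g' : ℂ} {x : ℝ} (h : HasDerivAt g g' x)
    (e : ∀ s, f s = g s) (e' : f' = g') : HasDerivAt f f' x := by
  obtain rfl : f = g := funext e
  rwa [e']

lemma integral_exp_neg_le {τ : ℝ} (hτ : 0 < τ) (x T : ℝ) :
    ∫ t in x..T, Real.exp (-2 * τ * t) ≤ Real.exp (-2 * τ * x) / (2 * τ) := by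
  have h : ∫ t in x..T, Real.exp (-2 * τ * t)
      = (-(Real.exp (-2 * τ * T) / (2 * τ))) - (-(Real.exp (-2 * τ * x) / (2 * τ))) := by
    apply intervalIntegral.integral_eq_sub_of_hasDerivAt
      (f := fun t => -(Real.exp (-2 * τ * t) / (2 * τ)))
    · intro t _
      have h1 : HasDerivAt (fun t : ℝ => -2 * τ * t) (-2 * τ) t := by
        simpa using (hasDerivAt_id t).const_mul (-2 * τ)
      have h2 := (h1.exp.div_const (2 * τ)).neg
      have e : -(Real.exp (-2 * τ * t) * (-2 * τ) / (2 * τ)) = Real.exp (-2 * τ * t) := by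
        field_simp
      rw [e] at h2
      exact h2
    · exact Continuous.intervalIntegrable (by fun_prop) _ _
  rw [h]
  have : 0 ≤ Real.exp (-2 * τ * T) / (2 * τ) := by positivity
  linarith

lemma integral_exp_back_le {τ : ℝ} (hτ : 0 < τ) (x T : ℝ) :
    ∫ t in x..T, Real.exp (-2 * τ * (T - t)) ≤ 1 / (2 * τ) := by
  have h : ∫ t in x..T, Real.exp (-2 * τ * (T - t))
      = (Real.exp (-2 * τ * (T - T)) / (2 * τ)) - (Real.exp (-2 * τ * (T - x)) / (2 * τ)) := by
    apply intervalIntegral.integral_eq_sub_of_hasDerivAt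
      (f := fun t => (Real.exp (-2 * τ * (T - t)) / (2 * τ)))
    · intro t _
      have h1 : HasDerivAt (fun t : ℝ => -2 * τ * (T - t)) (-2 * τ * (-1)) t := by
        simpa using ((hasDerivAt_id t).const_sub T).const_mul (-2 * τ)
      have h2 := (h1.exp.div_const (2 * τ))
      have e : Real.exp (-2 * τ * (T - t)) * (-2 * τ * (-1)) / (2 * τ)
          = Real.exp (-2 * τ * (T - t)) := by
        field_simp
      rw [e] at h2
      exact h2
    · exact Continuous.intervalIntegrable (by fun_prop) _ _
  rw [h]
  have : 0 ≤ Real.exp (-2 * τ * (T - x)) / (2 * τ) := by positivity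
  simp only [sub_self, mul_zero, Real.exp_zero]
  linarith

lemma norm_exp_two (lam : ℂ) (t : ℝ) :
    ‖Complex.exp (2 * Complex.I * lam * t)‖ = Real.exp (-2 * lam.im * t) := by
  rw [Complex.norm_exp]; congr 1; simp

lemma core_est {T M : ℝ} (hT : 0 < T) (hM : 0 ≤ M) {lam : ℂ} (hτ : 0 < lam.im)
    (hM1 : M ≤ 2 * lam.im) (hM2 : M ^ 2 * T ≤ lam.im) {α β a b : ℝ → ℂ}
    (cα : ContinuousOn α (Icc 0 T)) (cβ : ContinuousOn β (Icc 0 T))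
    (ca : ContinuousOn a (Icc 0 T)) (cb : ContinuousOn b (Icc 0 T))
    (hα : ∀ t ∈ Icc 0 T, ‖α t‖ ≤ M) (hβ : ∀ t ∈ Icc 0 T, ‖β t‖ ≤ M)
    (da : ∀ t ∈ Ioo 0 T, HasDerivAt a (α t * b t) t)
    (db : ∀ t ∈ Ioo 0 T, HasDerivAt (fun s : ℝ => Complex.exp (2 * Complex.I * lam * s) * b s)
      (Complex.exp (2 * Complex.I * lam * t) * (β t * a t)) t)
    {c : ℝ} (haT : ‖a T‖ = c) (hbT : ‖b T‖ = c) :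
    ∀ x ∈ Icc 0 T, ‖b x‖ ≤ c * Real.exp (-2 * lam.im * (T - x)) + M * (4 * c) / (2 * lam.im) ∧
      ‖a x - a T‖ ≤ (M * c + M ^ 2 * T * (4 * c)) / (2 * lam.im) ∧ ‖a x‖ ≤ 4 * c := by
  set τ := lam.im with hτdef
  have hc : 0 ≤ c := haT ▸ norm_nonneg _
  obtain ⟨x₀, hx₀, hmax⟩ := isCompact_Icc.exists_isMaxOn (nonempty_Icc.2 hT.le) ca.norm
  set A := ‖a x₀‖ with hA
  have hAx : ∀ x ∈ Icc 0 T, ‖a x‖ ≤ A := fun x hx => hmax hx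
  have hA0 : 0 ≤ A := norm_nonneg _
  have ce : ContinuousOn (fun s : ℝ => Complex.exp (2 * Complex.I * lam * s)) (Icc 0 T) := by
    fun_prop
  have hb : ∀ x ∈ Icc 0 T, ‖b x‖ ≤ c * Real.exp (-2 * τ * (T - x)) + M * A / (2 * τ) := by
    intro x hx
    have hsub : Icc x T ⊆ Icc 0 T := Icc_subset_Icc_left hx.1
    have h1 := intervalIntegral.integral_eq_sub_of_hasDerivAt_of_le hx.2
      ((ce.mul cb).mono hsub) (fun t ht => db t ⟨hx.1.trans_lt ht.1, ht.2⟩)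
      (ContinuousOn.intervalIntegrable (by
        rw [uIcc_of_le hx.2]; exact (ce.mul (cβ.mul ca)).mono hsub))
    have h2 : ‖∫ t in x..T, Complex.exp (2 * Complex.I * lam * t) * (β t * a t)‖
        ≤ ∫ t in x..T, Real.exp (-2 * τ * t) * (M * A) := by
      apply intervalIntegral.norm_integral_le_of_norm_le hx.2
      · refine Eventually.of_forall fun t ht => ?_
        have ht' : t ∈ Icc 0 T := hsub ⟨ht.1.le, ht.2⟩
        rw [norm_mul, norm_exp_two, norm_mul]
        gcongr
        · exact hβ t ht'
        · exact hAx t ht'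
      · exact Continuous.intervalIntegrable (by fun_prop) _ _
    rw [intervalIntegral.integral_mul_const] at h2
    have h3 := mul_le_mul_of_nonneg_right (integral_exp_neg_le hτ x T) (mul_nonneg hM hA0)
    have h4 : Complex.exp (2 * Complex.I * lam * x) * b x =
      Complex.exp (2 * Complex.I * lam * T) * b T -
        ∫ t in x..T, Complex.exp (2 * Complex.I * lam * t) * (β t * a t) := by
      rw [h1]; simp only [Pi.mul_apply]; ring
    have h5 : Real.exp (-2 * τ * x) * ‖b x‖ ≤
        Real.exp (-2 * τ * T) * c + Real.exp (-2 * τ * x) / (2 * τ) * (M * A) := by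
      calc Real.exp (-2 * τ * x) * ‖b x‖ = ‖Complex.exp (2 * Complex.I * lam * x) * b x‖ := by
            rw [norm_mul, norm_exp_two]
        _ ≤ _ := by
            rw [h4]
            refine (norm_sub_le _ _).trans ?_
            rw [norm_mul, norm_exp_two, hbT]
            linarith
    have h6 : Real.exp (-2 * τ * T) = Real.exp (-2 * τ * x) * Real.exp (-2 * τ * (T - x)) := by
      rw [← Real.exp_add]; congr 1; ring
    rw [h6] at h5
    refine le_of_mul_le_mul_left ?_ (Real.exp_pos (-2 * τ * x))
    calc _ ≤ _ := h5
      _ = _ := by ring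
  have ha : ∀ x ∈ Icc 0 T, ‖a x - a T‖ ≤ (M * c + M ^ 2 * T * A) / (2 * τ) := by
    intro x hx
    have hsub : Icc x T ⊆ Icc 0 T := Icc_subset_Icc_left hx.1
    have h1 := intervalIntegral.integral_eq_sub_of_hasDerivAt_of_le hx.2
      (ca.mono hsub) (fun t ht => da t ⟨hx.1.trans_lt ht.1, ht.2⟩)
      (ContinuousOn.intervalIntegrable (by
        rw [uIcc_of_le hx.2]; exact (cα.mul cb).mono hsub))
    have h2 : ‖∫ t in x..T, α t * b t‖
        ≤ ∫ t in x..T, ((M * c) * Real.exp (-2 * τ * (T - t)) + M * (M * A / (2 * τ))) := by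
      apply intervalIntegral.norm_integral_le_of_norm_le hx.2
      · refine Eventually.of_forall fun t ht => ?_
        have ht' : t ∈ Icc 0 T := hsub ⟨ht.1.le, ht.2⟩
        rw [norm_mul]
        calc _ ≤ M * (c * Real.exp (-2 * τ * (T - t)) + M * A / (2 * τ)) := by
              gcongr
              · exact hα t ht'
              · exact hb t ht'
          _ = _ := by ring
      · exact Continuous.intervalIntegrable (by fun_prop) _ _
    rw [intervalIntegral.integral_add (Continuous.intervalIntegrable (by fun_prop) _ _)
      (Continuous.intervalIntegrable (by fun_prop) _ _), intervalIntegral.integral_const_mul,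
      intervalIntegral.integral_const, smul_eq_mul, h1] at h2
    have h3 := mul_le_mul_of_nonneg_left (integral_exp_back_le hτ x T) (mul_nonneg hM hc)
    have h4 : (T - x) * (M * (M * A / (2 * τ))) ≤ T * (M * (M * A / (2 * τ))) := by
      have : T - x ≤ T := by linarith [hx.1]
      gcongr
    rw [norm_sub_rev]
    calc _ ≤ _ := h2
      _ ≤ M * c * (1 / (2 * τ)) + T * (M * (M * A / (2 * τ))) := by linarith
      _ = _ := by ring
  have hA4 : A ≤ 4 * c := by
    have h1 := ha x₀ hx₀
    have h2 : A ≤ ‖a x₀ - a T‖ + c := by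
      rw [← haT, hA]
      simpa using norm_add_le (a x₀ - a T) (a T)
    have h3 : (M * c + M ^ 2 * T * A) / (2 * τ) ≤ c + A / 2 := by
      rw [div_le_iff₀ (by positivity)]
      nlinarith [mul_le_mul_of_nonneg_right hM1 hc, mul_le_mul_of_nonneg_right hM2 hA0]
    linarith
  intro x hx
  refine ⟨(hb x hx).trans ?_, (ha x hx).trans ?_, (hAx x hx).trans hA4⟩ <;> gcongr

lemma AbsContOn.continuousOn {f : ℝ → ℂ} {T : ℝ} (hT : 0 < T) (h : AbsContOn f T) :
    ContinuousOn f (Icc 0 T) := by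
  obtain ⟨g, hg, hf⟩ := h
  have h1 := intervalIntegral.continuousOn_primitive_interval' hg left_mem_uIcc
  rw [uIcc_of_le hT.le] at h1
  exact (continuousOn_const.add h1).congr hf

lemma hasDerivAt_of_integral {f g : ℝ → ℂ} {T : ℝ} {c : ℂ} (hg : ContinuousOn g (Icc 0 T))
    (hf : ∀ x ∈ Icc 0 T, f x = c + ∫ t in (0 : ℝ)..x, g t) :
    ∀ x ∈ Ioo 0 T, HasDerivAt f (g x) x := by
  intro x hx
  have h1 : HasDerivAt (fun u => ∫ t in (0 : ℝ)..u, g t) (g x) x := by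
    apply intervalIntegral.integral_hasDerivAt_right
    · apply ContinuousOn.intervalIntegrable
      rw [uIcc_of_le hx.1.le]
      exact hg.mono (Icc_subset_Icc_right hx.2.le)
    · exact (hg.mono Ioo_subset_Icc_self).stronglyMeasurableAtFilter isOpen_Ioo x hx
    · exact hg.continuousAt (Icc_mem_nhds hx.1 hx.2)
  refine (h1.const_add c).congr_of_eventuallyEq ?_
  filter_upwards [Icc_mem_nhds hx.1 hx.2] with u hu using hf u hu

/-- the estimate for Dirac solutions with `y₁(T) = 0`. -/
lemma dirac_est {T M : ℝ} (hT : 0 < T) (hM : 0 ≤ M) {lam : ℂ} (hτ : 0 < lam.im)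
    (hM1 : M ≤ 2 * lam.im) (hM2 : M ^ 2 * T ≤ lam.im) {p q : ℝ → ℂ}
    (cp : ContinuousOn p (Icc 0 T)) (cq : ContinuousOn q (Icc 0 T))
    (hpq : ∀ t ∈ Icc 0 T, ‖p t‖ + ‖q t‖ ≤ M)
    {y : ℝ → ℂ × ℂ} (hy : IsDiracSol p q T lam y) (hyT : (y T).1 = 0) {c : ℝ}
    (hc : ‖Complex.exp (-(Complex.I * lam * T)) * (y T).2‖ = c) :
    ∀ x ∈ Icc 0 T,
      ‖Complex.exp (-(Complex.I * lam * x)) * ((y x).1 - Complex.I * (y x).2)‖ ≤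
        c * Real.exp (-2 * lam.im * (T - x)) + M * (4 * c) / (2 * lam.im) ∧
      ‖Complex.exp (-(Complex.I * lam * x)) * ((y x).1 + Complex.I * (y x).2)
        - Complex.I * (Complex.exp (-(Complex.I * lam * T)) * (y T).2)‖
        ≤ (M * c + M ^ 2 * T * (4 * c)) / (2 * lam.im) ∧
      ‖Complex.exp (-(Complex.I * lam * x)) * ((y x).1 + Complex.I * (y x).2)‖ ≤ 4 * c := by
  obtain ⟨cy, hint⟩ := hy
  have c1 : ContinuousOn (fun t => (y t).1) (Icc 0 T) := continuous_fst.comp_continuousOn cy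
  have c2 : ContinuousOn (fun t => (y t).2) (Icc 0 T) := continuous_snd.comp_continuousOn cy
  have d1 := hasDerivAt_of_integral (f := fun t => (y t).1)
    (g := fun t => q t * (y t).1 - (p t + lam) * (y t).2) (T := T)
    (by fun_prop) (fun x hx => (hint x hx).1)
  have d2 := hasDerivAt_of_integral (f := fun t => (y t).2)
    (g := fun t => (lam - p t) * (y t).1 - q t * (y t).2) (T := T)
    (by fun_prop) (fun x hx => (hint x hx).2)
  have dl : ∀ (k : ℂ) (t : ℝ), HasDerivAt (fun s : ℝ => Complex.exp (k * s))
      (Complex.exp (k * t) * k) t := by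
    intro k t
    have : HasDerivAt (fun s : ℝ => k * (s : ℂ)) k t := by
      simpa using (Complex.ofRealCLM.hasDerivAt (x := t)).const_mul k
    exact this.cexp
  have key := core_est (α := fun t => q t - Complex.I * p t) (β := fun t => q t + Complex.I * p t)
    (a := fun x => Complex.exp (-(Complex.I * lam * x)) * ((y x).1 + Complex.I * (y x).2))
    (b := fun x => Complex.exp (-(Complex.I * lam * x)) * ((y x).1 - Complex.I * (y x).2))
    hT hM hτ hM1 hM2 (by fun_prop) (by fun_prop) (by fun_prop) (by fun_prop)
    (fun t ht => (norm_sub_le _ _).trans (by simpa [add_comm] using hpq t ht))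
    (fun t ht => (norm_add_le _ _).trans (by simpa [add_comm] using hpq t ht))
    (by
      intro t ht
      have h := (dl (-(Complex.I * lam)) t).mul ((d1 t ht).add ((d2 t ht).const_mul Complex.I))
      refine hasDerivAt_of_eq h (fun s => by simp) ?_
      · simp only [Pi.add_apply, neg_mul]
        linear_combination (Complex.exp (-(Complex.I * lam * t)) * ((y t).2 * p t + lam * (y t).2)) * Complex.I_mul_I)
    (by
      intro t ht
      have h := (dl (Complex.I * lam) t).mul ((d1 t ht).sub ((d2 t ht).const_mul Complex.I))
      have e : ∀ s : ℝ, Complex.exp (2 * Complex.I * lam * s) *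
          Complex.exp (-(Complex.I * lam * s)) = Complex.exp (Complex.I * lam * s) := by
        intro s; rw [← Complex.exp_add]; congr 1; ring
      refine hasDerivAt_of_eq h (fun s => by rw [← mul_assoc, e]; simp) ?_
      · rw [mul_left_comm (q t + Complex.I * p t), ← mul_assoc, e]
        simp only [Pi.sub_apply]
        linear_combination (Complex.exp (Complex.I * lam * t) * ((y t).2 * p t + lam * (y t).2)) * Complex.I_mul_I)
    (c := c) (by simpa [hyT] using hc) (by simpa [hyT] using hc)
  intro x hx
  have := key x hx
  refine ⟨this.1, ?_, this.2.2⟩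
  have h2 := this.2.1
  simp only [hyT, zero_add] at h2
  rw [mul_left_comm]
  exact h2

lemma IsDiracSol.lin {T : ℝ} {lam : ℂ} {p q : ℝ → ℂ}
    (cp : ContinuousOn p (Icc 0 T)) (cq : ContinuousOn q (Icc 0 T)) {y z : ℝ → ℂ × ℂ}
    (hy : IsDiracSol p q T lam y) (hz : IsDiracSol p q T lam z) (k l : ℂ) :
    IsDiracSol p q T lam (fun t => k • y t + l • z t) := by
  obtain ⟨cy, hy⟩ := hy
  obtain ⟨cz, hz⟩ := hz
  refine ⟨by fun_prop, fun x hx => ?_⟩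
  have hsub : Icc 0 x ⊆ Icc 0 T := Icc_subset_Icc_right hx.2
  have cp := cp.mono hsub
  have cq := cq.mono hsub
  have cy := cy.mono hsub
  have cz := cz.mono hsub
  have y1 : ContinuousOn (fun t => (y t).1) (Icc 0 x) := continuous_fst.comp_continuousOn cy
  have y2 : ContinuousOn (fun t => (y t).2) (Icc 0 x) := continuous_snd.comp_continuousOn cy
  have z1 : ContinuousOn (fun t => (z t).1) (Icc 0 x) := continuous_fst.comp_continuousOn cz
  have z2 : ContinuousOn (fun t => (z t).2) (Icc 0 x) := continuous_snd.comp_continuousOn cz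
  have key : ∀ f g : ℝ → ℂ, ContinuousOn f (Icc 0 x) → ContinuousOn g (Icc 0 x) →
      ∫ t in (0 : ℝ)..x, (k * f t + l * g t) =
        k * (∫ t in (0 : ℝ)..x, f t) + l * ∫ t in (0 : ℝ)..x, g t := by
    intro f g hf hg
    rw [intervalIntegral.integral_add, intervalIntegral.integral_const_mul,
      intervalIntegral.integral_const_mul]
    · exact ContinuousOn.intervalIntegrable (by rw [uIcc_of_le hx.1]; fun_prop)
    · exact ContinuousOn.intervalIntegrable (by rw [uIcc_of_le hx.1]; fun_prop)
  simp only [Prod.fst_add, Prod.snd_add, Prod.smul_fst, Prod.smul_snd, smul_eq_mul]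
  constructor
  · rw [(hy x hx).1, (hz x hx).1]
    have h := key (fun t => q t * (y t).1 - (p t + lam) * (y t).2)
      (fun t => q t * (z t).1 - (p t + lam) * (z t).2) (by fun_prop) (by fun_prop)
    have e : (∫ t in (0 : ℝ)..x, (q t * (k * (y t).1 + l * (z t).1) -
        (p t + lam) * (k * (y t).2 + l * (z t).2))) =
        ∫ t in (0 : ℝ)..x, (k * (q t * (y t).1 - (p t + lam) * (y t).2) +
          l * (q t * (z t).1 - (p t + lam) * (z t).2)) := by
      congr 1; funext t; ring
    rw [e, h]; ring
  · rw [(hy x hx).2, (hz x hx).2]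
    have h := key (fun t => (lam - p t) * (y t).1 - q t * (y t).2)
      (fun t => (lam - p t) * (z t).1 - q t * (z t).2) (by fun_prop) (by fun_prop)
    have e : (∫ t in (0 : ℝ)..x, ((lam - p t) * (k * (y t).1 + l * (z t).1) -
        q t * (k * (y t).2 + l * (z t).2))) =
        ∫ t in (0 : ℝ)..x, (k * ((lam - p t) * (y t).1 - q t * (y t).2) +
          l * ((lam - p t) * (z t).1 - q t * (z t).2)) := by
      congr 1; funext t; ring
    rw [e, h]; ring

lemma integrable_w_mul {T : ℝ} {μ : Measure ℝ} {w f : ℝ → ℂ} (hw : Integrable w μ)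
    (hf : ContinuousOn f (Icc 0 T)) :
    Integrable (fun t => w t * f t) (μ.restrict (Icc 0 T)) := by
  obtain ⟨C, hC⟩ := isCompact_Icc.exists_bound_of_continuousOn hf
  refine hw.restrict.mul_bdd (c := C) (hf.aestronglyMeasurable measurableSet_Icc) ?_
  exact (ae_restrict_iff' measurableSet_Icc).2 (Eventually.of_forall hC)

lemma NonlocalForm.app_lin {T : ℝ} (U : NonlocalForm T) {y z : ℝ → ℂ × ℂ}
    (cy : ContinuousOn y (Icc 0 T)) (cz : ContinuousOn z (Icc 0 T)) (k l : ℂ) :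
    U.app (fun t => k • y t + l • z t) = k * U.app y + l * U.app z := by
  have y1 : ContinuousOn (fun t => (y t).1) (Icc 0 T) := continuous_fst.comp_continuousOn cy
  have y2 : ContinuousOn (fun t => (y t).2) (Icc 0 T) := continuous_snd.comp_continuousOn cy
  have z1 : ContinuousOn (fun t => (z t).1) (Icc 0 T) := continuous_fst.comp_continuousOn cz
  have z2 : ContinuousOn (fun t => (z t).2) (Icc 0 T) := continuous_snd.comp_continuousOn cz
  have key : ∀ (μ : Measure ℝ) (w f g : ℝ → ℂ), Integrable w μ → ContinuousOn f (Icc 0 T) →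
      ContinuousOn g (Icc 0 T) →
      ∫ t in Icc (0 : ℝ) T, w t * (k * f t + l * g t) ∂μ =
        k * (∫ t in Icc (0 : ℝ) T, w t * f t ∂μ) + l * ∫ t in Icc (0 : ℝ) T, w t * g t ∂μ := by
    intro μ w f g hw hf hg
    rw [← integral_const_mul, ← integral_const_mul, ← integral_add
      ((integrable_w_mul hw hf).const_mul k) ((integrable_w_mul hw hg).const_mul l)]
    congr 1; funext t; ring
  unfold NonlocalForm.app
  simp only [Prod.fst_add, Prod.snd_add, Prod.smul_fst, Prod.smul_snd, smul_eq_mul]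
  rw [key _ _ _ _ U.int₁ y1 z1, key _ _ _ _ U.int₂ y2 z2]
  ring

/-- dominated convergence for one component -/
lemma dct_component {T : ℝ} (hT : 0 < T) {F : Filter ℂ} [F.IsCountablyGenerated]
    (hF : Tendsto Complex.im F atTop) {μ : Measure ℝ} [IsFiniteMeasure μ] {w : ℝ → ℂ}
    (hw : Integrable w μ) {f : ℂ → ℝ → ℂ} (hf : ∀ᶠ lam in F, ContinuousOn (f lam) (Icc 0 T))
    {K : ℝ} (hb : ∀ᶠ lam in F, ∀ t ∈ Icc 0 T, ‖f lam t‖ ≤ K * Real.exp (-lam.im * t))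
    {L : ℂ} (h0 : Tendsto (fun lam => f lam 0) F (nhds L)) :
    Tendsto (fun lam => ∫ t in Icc (0 : ℝ) T, w t * f lam t ∂μ) F
      (nhds (w 0 * ((μ {0}).toReal : ℂ) * L)) := by
  have e : ∫ t in Icc (0 : ℝ) T, (({0} : Set ℝ).indicator (fun t => w t * L)) t ∂μ =
      w 0 * ((μ {0}).toReal : ℂ) * L := by
    rw [integral_indicator (measurableSet_singleton 0), Measure.restrict_restrict
      (measurableSet_singleton 0)]
    have : ({0} : Set ℝ) ∩ Icc 0 T = {0} := by
      apply inter_eq_left.2; simp [hT.le]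
    rw [this, Measure.restrict_singleton, integral_smul_measure, integral_dirac]
    rw [Complex.real_smul]; ring
  rw [← e]
  apply tendsto_integral_filter_of_dominated_convergence (fun t => ‖w t‖ * |K|)
  · filter_upwards [hf] with lam h using (integrable_w_mul hw h).aestronglyMeasurable
  · filter_upwards [hb, hF.eventually_ge_atTop 0] with lam h hτ
    refine (ae_restrict_iff' measurableSet_Icc).2 (Eventually.of_forall fun t ht => ?_)
    rw [norm_mul]
    gcongr
    refine (h t ht).trans ((mul_le_mul_of_nonneg_right (le_abs_self K) (Real.exp_pos _).le).trans ?_)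
    have : Real.exp (-lam.im * t) ≤ 1 := by
      rw [Real.exp_le_one_iff]; nlinarith [ht.1]
    nlinarith [abs_nonneg K]
  · exact hw.restrict.norm.mul_const _
  · refine (ae_restrict_iff' measurableSet_Icc).2 (Eventually.of_forall fun t ht => ?_)
    rcases eq_or_lt_of_le ht.1 with rfl | hpos
    · simpa using h0.const_mul (w 0)
    · have hne : t ∉ ({0} : Set ℝ) := by simpa using hpos.ne'
      rw [indicator_of_notMem hne]
      have : Tendsto (fun lam => f lam t) F (nhds 0) := by
        apply squeeze_zero_norm' (hb.mono fun lam h => h t ht)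
        have h1 : Tendsto (fun lam : ℂ => -lam.im * t) F atBot :=
          (tendsto_neg_atTop_atBot.comp hF).atBot_mul_const hpos
        simpa using (Real.tendsto_exp_atBot.comp h1).const_mul K
      simpa using this.const_mul (w t)

lemma exists_good {T : ℝ} {p q : ℝ → ℂ}
    (cp : ContinuousOn p (Icc 0 T)) (cq : ContinuousOn q (Icc 0 T)) {F : Filter ℂ}
    (hF : Tendsto Complex.im F atTop) :
    ∃ M, 0 ≤ M ∧ (∀ t ∈ Icc 0 T, ‖p t‖ + ‖q t‖ ≤ M) ∧
      ∀ᶠ lam in F, 0 < lam.im ∧ M ≤ 2 * lam.im ∧ M ^ 2 * T ≤ lam.im := by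
  obtain ⟨C, hC⟩ := isCompact_Icc.exists_bound_of_continuousOn cp
  obtain ⟨D, hD⟩ := isCompact_Icc.exists_bound_of_continuousOn cq
  refine ⟨|C| + |D|, by positivity, fun t ht => add_le_add ((hC t ht).trans (le_abs_self _))
    ((hD t ht).trans (le_abs_self _)), ?_⟩
  filter_upwards [hF.eventually_gt_atTop 0, hF.eventually_ge_atTop ((|C| + |D|) / 2),
    hF.eventually_ge_atTop ((|C| + |D|) ^ 2 * T)] with lam h1 h2 h3
  exact ⟨h1, by linarith, h3⟩

lemma exp_cancel (lam : ℂ) (x : ℝ) (z : ℂ) :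
    Complex.exp (Complex.I * lam * x) * (Complex.exp (-(Complex.I * lam * x)) * z) = z := by
  rw [← mul_assoc, ← Complex.exp_add]; simp

lemma norm_exp_one (lam : ℂ) (t : ℝ) :
    ‖Complex.exp (Complex.I * lam * t)‖ = Real.exp (-lam.im * t) := by
  rw [Complex.norm_exp]; congr 1; simp

lemma eventually_unique {T : ℝ} (hT : 0 < T) {p q : ℝ → ℂ}
    (cp : ContinuousOn p (Icc 0 T)) (cq : ContinuousOn q (Icc 0 T)) {F : Filter ℂ}
    (hF : Tendsto Complex.im F atTop) :
    ∀ᶠ lam in F, ∀ y, IsDiracSol p q T lam y → y T = 0 → ∀ x ∈ Icc 0 T, y x = 0 := by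
  obtain ⟨M, hM, hpq, hev⟩ := exists_good cp cq hF
  filter_upwards [hev] with lam ⟨h1, h2, h3⟩ y hy hyT x hx
  have h := dirac_est hT hM h1 h2 h3 cp cq hpq hy (by simp [hyT]) (c := 0) (by simp [hyT]) x hx
  have hv : (y x).1 - Complex.I * (y x).2 = 0 := by
    have := norm_le_zero_iff.1 (h.1.trans (by simp))
    simpa [Complex.exp_ne_zero] using this
  have hu : (y x).1 + Complex.I * (y x).2 = 0 := by
    have := norm_le_zero_iff.1 (h.2.2.trans (by simp))
    simpa [Complex.exp_ne_zero] using this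
  have e1 : (y x).1 = 0 := by linear_combination (hu + hv) / 2
  have e2 : (y x).2 = 0 := by
    linear_combination (-Complex.I / 2) * (hu - hv) + (y x).2 * Complex.I_mul_I
  exact Prod.ext e1 e2

lemma family_limit {T : ℝ} (hT : 0 < T) {p q : ℝ → ℂ}
    (cp : ContinuousOn p (Icc 0 T)) (cq : ContinuousOn q (Icc 0 T)) {F : Filter ℂ}
    [F.IsCountablyGenerated] (hF : Tendsto Complex.im F atTop) (U : NonlocalForm T)
    {y : ℂ → ℝ → ℂ × ℂ} (hy : ∀ᶠ lam in F, IsDiracSol p q T lam (y lam) ∧ (y lam T).1 = 0 ∧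
      (y lam T).2 = -2 * Complex.I * Complex.exp (Complex.I * lam * T)) :
    (∀ x ∈ Ico 0 T,
      Tendsto (fun lam : ℂ => Complex.exp (-(Complex.I * lam * x)) * (y lam x).1) F (nhds 1) ∧
      Tendsto (fun lam : ℂ => Complex.exp (-(Complex.I * lam * x)) * (y lam x).2) F
        (nhds (-Complex.I))) ∧
    Tendsto (fun lam => U.app (y lam)) F (nhds (U.h₁ - Complex.I * U.h₂)) := by
  obtain ⟨M, hM, hpq, hev⟩ := exists_good cp cq hF
  have hest : ∀ᶠ lam in F, ∀ x ∈ Icc 0 T,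
      ‖Complex.exp (-(Complex.I * lam * x)) * ((y lam x).1 - Complex.I * (y lam x).2)‖ ≤
        2 * Real.exp (-2 * lam.im * (T - x)) + M * (4 * 2) / (2 * lam.im) ∧
      ‖Complex.exp (-(Complex.I * lam * x)) * ((y lam x).1 + Complex.I * (y lam x).2) - 2‖
        ≤ (M * 2 + M ^ 2 * T * (4 * 2)) / (2 * lam.im) ∧
      ‖Complex.exp (-(Complex.I * lam * x)) * ((y lam x).1 + Complex.I * (y lam x).2)‖
        ≤ 4 * 2 := by
    filter_upwards [hev, hy] with lam ⟨h1, h2, h3⟩ ⟨hs, hT1, hT2⟩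
    have e : Complex.exp (-(Complex.I * lam * T)) * (y lam T).2 = -2 * Complex.I := by
      rw [hT2, mul_left_comm, ← Complex.exp_add]; simp
    have h := dirac_est hT hM h1 h2 h3 cp cq hpq hs hT1 (c := 2) (by rw [e]; simp)
    rw [e] at h
    have e2 : Complex.I * (-2 * Complex.I) = 2 := by
      linear_combination (-2) * Complex.I_mul_I
    rw [e2] at h
    exact h
  have hinv : ∀ C : ℝ, Tendsto (fun lam : ℂ => C / (2 * lam.im)) F (nhds 0) := fun C =>
    Tendsto.const_div_atTop (hF.const_mul_atTop (by norm_num : (0 : ℝ) < 2)) C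
  have hlim : ∀ x ∈ Ico 0 T,
      Tendsto (fun lam : ℂ => Complex.exp (-(Complex.I * lam * x)) * (y lam x).1) F (nhds 1) ∧
      Tendsto (fun lam : ℂ => Complex.exp (-(Complex.I * lam * x)) * (y lam x).2) F
        (nhds (-Complex.I)) := by
    intro x hx
    have hv : Tendsto (fun lam : ℂ => Complex.exp (-(Complex.I * lam * x)) *
        ((y lam x).1 - Complex.I * (y lam x).2)) F (nhds 0) := by
      apply squeeze_zero_norm' (hest.mono fun lam h => (h x ⟨hx.1, hx.2.le⟩).1)
      have h1 : Tendsto (fun lam : ℂ => -2 * lam.im * (T - x)) F atBot :=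
        (hF.const_mul_atTop_of_neg (by norm_num : (-2 : ℝ) < 0)).atBot_mul_const
          (sub_pos.2 hx.2)
      simpa using ((Real.tendsto_exp_atBot.comp h1).const_mul 2).add (hinv (M * (4 * 2)))
    have hu : Tendsto (fun lam : ℂ => Complex.exp (-(Complex.I * lam * x)) *
        ((y lam x).1 + Complex.I * (y lam x).2)) F (nhds 2) := by
      rw [tendsto_iff_norm_sub_tendsto_zero]
      exact squeeze_zero' (Eventually.of_forall fun _ => norm_nonneg _)
        (hest.mono fun lam h => (h x ⟨hx.1, hx.2.le⟩).2.1) (hinv _)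
    constructor
    · have := (hu.add hv).div_const 2
      refine (this.congr fun lam => by ring).trans (by norm_num)
    · have := (hu.sub hv).const_mul (-Complex.I / 2)
      refine (this.congr fun lam => ?_).trans (le_of_eq (by congr 1; ring))
      linear_combination (-(Complex.exp (-(Complex.I * lam * x)) * (y lam x).2)) *
        Complex.I_mul_I
  refine ⟨hlim, ?_⟩
  have hb : ∀ᶠ lam in F, ∀ t ∈ Icc 0 T, ‖(y lam t).1‖ ≤ 9 * Real.exp (-lam.im * t) ∧
      ‖(y lam t).2‖ ≤ 9 * Real.exp (-lam.im * t) := by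
    filter_upwards [hest, hev] with lam h ⟨h1, h2, h3⟩ t ht
    obtain ⟨ev, -, eu⟩ := h t ht
    have hexp : Real.exp (-2 * lam.im * (T - t)) ≤ 1 := by
      rw [Real.exp_le_one_iff]
      nlinarith [ht.2]
    have hdiv : M * (4 * 2) / (2 * lam.im) ≤ 8 := by
      rw [div_le_iff₀ (by positivity)]; linarith
    have ev' : ‖Complex.exp (-(Complex.I * lam * t)) *
        ((y lam t).1 - Complex.I * (y lam t).2)‖ ≤ 10 := by linarith
    generalize hA : Complex.exp (-(Complex.I * lam * t)) *
        ((y lam t).1 + Complex.I * (y lam t).2) = A at eu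
    generalize hB : Complex.exp (-(Complex.I * lam * t)) *
        ((y lam t).1 - Complex.I * (y lam t).2) = B at ev'
    have e1 : (y lam t).1 = (A + B) / 2 * Complex.exp (Complex.I * lam * t) := by
      rw [← exp_cancel lam t (y lam t).1, ← hA, ← hB]; ring
    have e2 : (y lam t).2 = (-Complex.I / 2) * (A - B) * Complex.exp (Complex.I * lam * t) := by
      rw [← exp_cancel lam t (y lam t).2, ← hA, ← hB]
      linear_combination (Complex.exp (-(Complex.I * lam * t)) *
        Complex.exp (Complex.I * lam * t) * (y lam t).2) * Complex.I_mul_I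
    constructor
    · rw [e1, norm_mul, norm_exp_one]
      gcongr
      have := norm_add_le A B
      rw [norm_div]
      norm_num
      linarith
    · rw [e2, norm_mul, norm_exp_one]
      gcongr
      have := norm_sub_le A B
      rw [norm_mul, norm_div, norm_neg, Complex.norm_I]
      norm_num
      linarith
  have := U.finite₁
  have := U.finite₂
  have h0 := hlim 0 ⟨le_rfl, hT⟩
  have t1 := dct_component hT hF U.int₁ (f := fun lam t => (y lam t).1)
    (hy.mono fun lam h => continuous_fst.comp_continuousOn h.1.1)
    (hb.mono fun lam h t ht => (h t ht).1) (by simpa using h0.1)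
  have t2 := dct_component hT hF U.int₂ (f := fun lam t => (y lam t).2)
    (hy.mono fun lam h => continuous_snd.comp_continuousOn h.1.1)
    (hb.mono fun lam h t ht => (h t ht).2) (by simpa using h0.2)
  have := t1.add t2
  unfold NonlocalForm.app NonlocalForm.h₁ NonlocalForm.h₂
  refine this.trans (le_of_eq ?_)
  congr 1
  ring

lemma sector_im {δ : ℝ} (hδ : δ ∈ Ioo (0 : ℝ) (Real.pi / 2)) :
    Tendsto Complex.im (sectorFilter δ) atTop := by
  have hs : 0 < Real.sin δ := Real.sin_pos_of_pos_of_lt_pi hδ.1 (by linarith [hδ.2, Real.pi_pos])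
  have h1 : Tendsto (fun lam : ℂ => ‖lam‖ * Real.sin δ) (sectorFilter δ) atTop :=
    (tendsto_comap.mono_left inf_le_left).atTop_mul_const hs
  refine tendsto_atTop_mono' _ ?_ h1
  have : ∀ᶠ lam in sectorFilter δ, Complex.arg lam ∈ Icc δ (Real.pi - δ) :=
    Filter.Eventually.filter_mono inf_le_right (mem_principal_self _)
  filter_upwards [this] with lam h
  rw [← Complex.norm_mul_sin_arg lam]
  gcongr
  rcases le_total lam.arg (Real.pi / 2) with h' | h'
  · exact Real.sin_le_sin_of_le_of_le_pi_div_two (by linarith [hδ.1, Real.pi_pos]) h' h.1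
  · rw [← Real.sin_pi_sub lam.arg]
    exact Real.sin_le_sin_of_le_of_le_pi_div_two (by linarith [hδ.1, Real.pi_pos])
      (by linarith) (by linarith [h.2])

instance sectorFilter_cg (δ : ℝ) : (sectorFilter δ).IsCountablyGenerated := by
  unfold sectorFilter; infer_instance

/-- **Lemma 2, equation (17)**: for fixed `δ ∈ (0, π/2)` and `x ∈ [0,T)`, as `|λ| → ∞`
in the sector `arg λ ∈ [δ, π−δ]` one eventually has `Δ₁(λ) ≠ 0` (so `Φ(·,λ)` is defined)
and `(h₁,₁ − i h₁,₂) e^{−iλx} Φ(x,λ) → (1, −i)ᵀ`. -/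
theorem statement14
    (T : ℝ) (hT : 0 < T)
    (p q : ℝ → ℂ) (hp : AbsContOn p T) (hq : AbsContOn q T)
    (U₁ U₂ : NonlocalForm T)
    (hh : U₁.h₁ - Complex.I * U₁.h₂ ≠ 0)
    (X₁ X₂ : ℂ → ℝ → ℂ × ℂ)
    (hX₁ : ∀ lam, IsDiracSol p q T lam (X₁ lam) ∧ X₁ lam 0 = (1, 0))
    (hX₂ : ∀ lam, IsDiracSol p q T lam (X₂ lam) ∧ X₂ lam 0 = (0, 1))
    (Δ₁ : ℂ → ℂ)
    (hΔ₁ : ∀ lam, Δ₁ lam =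
      U₁.app (X₁ lam) * (X₂ lam T).1 - U₁.app (X₂ lam) * (X₁ lam T).1)
    (Φ : ℂ → ℝ → ℂ × ℂ)
    (hΦ : ∀ lam, Δ₁ lam ≠ 0 →
      IsDiracSol p q T lam (Φ lam) ∧ U₁.app (Φ lam) = 1 ∧ (Φ lam T).1 = 0)
    (δ : ℝ) (hδ : δ ∈ Ioo (0 : ℝ) (Real.pi / 2))
    (x : ℝ) (hx : x ∈ Ico (0 : ℝ) T) :
    (∀ᶠ lam in sectorFilter δ, Δ₁ lam ≠ 0) ∧
    Tendsto
      (fun lam : ℂ =>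
        (U₁.h₁ - Complex.I * U₁.h₂) •
          (Complex.exp (-(Complex.I * lam * (x : ℂ))) • Φ lam x))
      (sectorFilter δ) (nhds ((1 : ℂ), -Complex.I)) := by
  have cp := hp.continuousOn hT
  have cq := hq.continuousOn hT
  have hF := sector_im hδ
  have huniq := eventually_unique hT cp cq hF
  have h0m : (0 : ℝ) ∈ Icc 0 T := ⟨le_rfl, hT.le⟩
  have hTm : T ∈ Icc 0 T := ⟨hT.le, le_rfl⟩
  -- solution vanishing at `T` in the first component
  set ψ : ℂ → ℝ → ℂ × ℂ := fun lam t => (X₂ lam T).1 • X₁ lam t + (-(X₁ lam T).1) • X₂ lam t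
    with hψ
  have hψsol : ∀ lam, IsDiracSol p q T lam (ψ lam) := fun lam =>
    IsDiracSol.lin cp cq (hX₁ lam).1 (hX₂ lam).1 _ _
  have hψU : ∀ lam, U₁.app (ψ lam) = Δ₁ lam := fun lam => by
    rw [hψ, U₁.app_lin (hX₁ lam).1.1 (hX₂ lam).1.1, hΔ₁]; ring
  have hψT : ∀ lam, (ψ lam T).1 = 0 := fun lam => by
    simp [hψ]; ring
  have hψne : ∀ᶠ lam in sectorFilter δ, (ψ lam T).2 ≠ 0 := by
    filter_upwards [huniq] with lam hu h2
    have e0 := hu _ (hψsol lam) (Prod.ext (hψT lam) h2) 0 h0m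
    simp only [hψ, (hX₁ lam).2, (hX₂ lam).2] at e0
    have e1 : (X₂ lam T).1 = 0 := by simpa using congrArg Prod.fst e0
    have e2 : (X₁ lam T).1 = 0 := by simpa using congrArg Prod.snd e0
    have e3 := hu _ (IsDiracSol.lin cp cq (hX₁ lam).1 (hX₂ lam).1 (X₂ lam T).2 (-(X₁ lam T).2))
      (Prod.ext (by simp [e1, e2]) (by simp; ring)) 0 h0m
    simp only [(hX₁ lam).2, (hX₂ lam).2] at e3
    have e4 : (X₁ lam T).2 = 0 := by simpa using congrArg Prod.snd e3
    have e5 := hu _ (hX₁ lam).1 (Prod.ext e2 e4) 0 h0m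
    rw [(hX₁ lam).2] at e5
    simpa using congrArg Prod.fst e5
  -- normalising factor
  have norm_fam : ∀ y : ℂ → ℝ → ℂ × ℂ, (∀ᶠ lam in sectorFilter δ, IsDiracSol p q T lam (y lam) ∧
      (y lam T).1 = 0 ∧ (y lam T).2 ≠ 0) → ∃ κ : ℂ → ℂ,
      (∀ x ∈ Ico 0 T,
        Tendsto (fun lam : ℂ => Complex.exp (-(Complex.I * lam * x)) * (κ lam * (y lam x).1))
          (sectorFilter δ) (nhds 1) ∧
        Tendsto (fun lam : ℂ => Complex.exp (-(Complex.I * lam * x)) * (κ lam * (y lam x).2))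
          (sectorFilter δ) (nhds (-Complex.I))) ∧
      Tendsto (fun lam => κ lam * U₁.app (y lam)) (sectorFilter δ)
        (nhds (U₁.h₁ - Complex.I * U₁.h₂)) := by
    intro y hy
    refine ⟨fun lam => -2 * Complex.I * Complex.exp (Complex.I * lam * T) / (y lam T).2, ?_⟩
    have h := family_limit hT cp cq hF U₁ (y := fun lam t =>
      (-2 * Complex.I * Complex.exp (Complex.I * lam * T) / (y lam T).2) • y lam t
        + (0 : ℂ) • y lam t) (by
      filter_upwards [hy] with lam ⟨h1, h2, h3⟩
      refine ⟨IsDiracSol.lin cp cq h1 h1 _ _, by simp [h2], ?_⟩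
      simp only [zero_smul, add_zero, Prod.smul_snd, smul_eq_mul]
      field_simp)
    refine ⟨fun x hx => by simpa using h.1 x hx, h.2.congr' ?_⟩
    filter_upwards [hy] with lam ⟨h1, h2, h3⟩
    rw [U₁.app_lin h1.1 h1.1]
    ring
  have hΔne : ∀ᶠ lam in sectorFilter δ, Δ₁ lam ≠ 0 := by
    obtain ⟨κ, -, hκ⟩ := norm_fam ψ (hψne.mono fun lam h => ⟨hψsol lam, hψT lam, h⟩)
    filter_upwards [hκ.eventually_ne hh] with lam h h'
    rw [hψU, h', mul_zero] at h
    exact h rfl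
  refine ⟨hΔne, ?_⟩
  obtain ⟨κ, hκx, hκ⟩ := norm_fam Φ (by
    filter_upwards [hΔne, huniq] with lam hne hu
    obtain ⟨h1, h2, h3⟩ := hΦ lam hne
    refine ⟨h1, h3, fun h4 => ?_⟩
    have hz := hu _ h1 (Prod.ext h3 h4)
    have : U₁.app (Φ lam) = 0 := by
      unfold NonlocalForm.app
      have i1 : ∫ t in Icc (0 : ℝ) T, U₁.w₁ t * (Φ lam t).1 ∂U₁.μ₁ = 0 :=
        setIntegral_eq_zero_of_forall_eq_zero (fun t ht => by simp [hz t ht])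
      have i2 : ∫ t in Icc (0 : ℝ) T, U₁.w₂ t * (Φ lam t).2 ∂U₁.μ₂ = 0 :=
        setIntegral_eq_zero_of_forall_eq_zero (fun t ht => by simp [hz t ht])
      rw [i1, i2, add_zero]
    rw [this] at h2
    exact zero_ne_one h2)
  have hκ' : Tendsto κ (sectorFilter δ) (nhds (U₁.h₁ - Complex.I * U₁.h₂)) := by
    refine hκ.congr' ?_
    filter_upwards [hΔne] with lam hne
    rw [(hΦ lam hne).2.1, mul_one]
  have hr : Tendsto (fun lam => (U₁.h₁ - Complex.I * U₁.h₂) / κ lam) (sectorFilter δ)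
      (nhds 1) := by
    have := (tendsto_const_nhds (x := U₁.h₁ - Complex.I * U₁.h₂)).div hκ' hh
    rwa [div_self hh] at this
  have hκne := hκ'.eventually_ne hh
  have r1 := hr.mul (hκx x hx).1
  have r2 := hr.mul (hκx x hx).2
  rw [one_mul] at r1 r2
  refine (r1.prodMk_nhds r2).congr' ?_
  filter_upwards [hκne] with lam hk
  ext
  · simp only [Prod.smul_fst, smul_eq_mul]; field_simp
  · simp only [Prod.smul_snd, smul_eq_mul]; field_simp
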